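/- Let E be a finite-dimensional real inner product space, μ ∈ (0,1), 0 < δ < r, K ⊆ E a nonempty compact set, and x ∈ E with d_K(x) ≤ r + δ and δ ≤ d_K(x) − r·(4−μ²)/(4+μ²). If no point z ∉ K with d_K(z) ∈ [d_K(x), d_K(x) + 2(r − d_K(x) + δ)/μ] is a μ-critical point of d_K, then there exists an acute r-spanning cone for K_δ from x: there are a unit vector w ∈ E and β ∈ [0, π/2) such that K_δ ∩ Metric.closedBall x r is nonempty and contained in {x + t • v : t ∈ [0,r], ‖v‖ = 1, angle(v,w) ≤ β}. -/

import Mathlib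

open Real Metric InnerProductGeometry

/-!
At a point `z` that is not `μ`-critical, moving away from the convex hull of its nearest points
increases `d_K` at a rate greater than `μ`. Maximizing `d_K - μ * dist · x` over a ball about `x`
therefore leads to its boundary, and one further small step gives, with `e = r - d_K(x) + δ`, a
length `L` slightly above `2 * e / μ` and a point `z` with `dist z x ≤ L` and
`d_K(z) > d_K(x) + μ * L`. Every point of `K_δ` then has distance at least
`d_K(x) + μ * L - δ ≥ r + μ * L / 2` from `z`. As soon as `r ^ 2 + L ^ 2 < (r + μ * L / 2) ^ 2`,
that is, `L < 4 * r * μ / (4 - μ ^ 2)`, the law of cosines bounds the angle at `x` between `x - z`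
and the points of `K_δ` within `r` of `x` away from `π / 2`.
-/

section

open Filter Topology Set

variable {E : Type*} [NormedAddCommGroup E] {K S : Set E} {x y z u w : E} {b c l r β δ η μ ρ : ℝ}

/-- The set `Γ_K(z)` of points of `K` at minimal distance from `z`. -/
def nearestPoints (K : Set E) (z : E) : Set E :=
  {q ∈ K | dist z q = infDist z K}

/-- The closed `δ`-offset `K_δ` of a nonempty set `K`; as `infDist` to the empty set is `0`, the
offset of the empty set is everything for `0 ≤ δ`. -/
def offset (K : Set E) (δ : ℝ) : Set E :=
  {y | infDist y K ≤ δ}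

theorem notMem_of_infDist_le_infDist (hKne : K.Nonempty) (hK : IsClosed K) (hx : x ∉ K)
    (hxz : infDist x K ≤ infDist z K) : z ∉ K :=
  (hK.notMem_iff_infDist_pos hKne).2 (((hK.notMem_iff_infDist_pos hKne).1 hx).trans_le hxz)

theorem offset_inter_closedBall_nonempty [NormedSpace ℝ E] (hKne : K.Nonempty)
    (hK : IsCompact K) (hr : 0 ≤ r) (hδ : 0 ≤ δ) (hx : infDist x K ≤ r + δ) :
    (offset K δ ∩ closedBall x r).Nonempty := by
  obtain ⟨q, hq, hq_min⟩ := hK.exists_infDist_eq_dist hKne x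
  obtain ⟨y, hxy, hyq⟩ := exists_dist_le_le hr hδ (by linarith : dist x q ≤ δ + r)
  exact ⟨y, (infDist_le_dist_of_mem hq).trans hyq, mem_closedBall'.2 hxy⟩

variable [InnerProductSpace ℝ E]

/-- `z` is a `μ`-critical point of the distance function of `K`. Points of `K` are by convention
not critical. -/
def IsMuCritical (μ : ℝ) (K : Set E) (z : E) : Prop :=
  z ∉ K ∧ infDist z (convexHull ℝ (nearestPoints K z)) ≤ μ * infDist z K

/-- The cone with apex `x`, axis `w` and half-angle `β`, cut off at distance `r` from the apex. -/
def truncatedCone (x w : E) (r β : ℝ) : Set E :=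
  {y | ∃ t ∈ Icc (0 : ℝ) r, ∃ v : E, ‖v‖ = 1 ∧ angle v w ≤ β ∧ y = x + t • v}

/-- There is an acute `r`-spanning cone for `S` from `x`: the part of `S` within distance `r` of `x`
is nonempty and lies in a truncated cone with apex `x` and half-angle less than `π / 2`. -/
def HasAcuteSpanningCone (S : Set E) (x : E) (r : ℝ) : Prop :=
  ∃ w : E, ‖w‖ = 1 ∧ ∃ β ∈ Ico (0 : ℝ) (π / 2),
    (S ∩ closedBall x r).Nonempty ∧ S ∩ closedBall x r ⊆ truncatedCone x w r β

theorem mem_truncatedCone_of_angle_sub_le (hyx : y ≠ x) (hyr : dist y x ≤ r)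
    (hβ : angle (y - x) w ≤ β) : y ∈ truncatedCone x w r β := by
  have hne : y - x ≠ 0 := sub_ne_zero.2 hyx
  have hpos : 0 < ‖y - x‖ := norm_pos_iff.2 hne
  refine ⟨‖y - x‖, ⟨hpos.le, dist_eq_norm y x ▸ hyr⟩, ‖y - x‖⁻¹ • (y - x),
    norm_smul_inv_norm (𝕜 := ℝ) hne, ?_, ?_⟩
  · rwa [angle_smul_left_of_pos _ _ (inv_pos.2 hpos)]
  · rw [smul_inv_smul₀ hpos.ne', add_sub_cancel]

theorem hasAcuteSpanningCone_of_forall_le_inner (hne : (S ∩ closedBall x r).Nonempty)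
    (hc : 0 < c) (h : ∀ y ∈ S ∩ closedBall x r, c ≤ inner ℝ (y - x) w) :
    HasAcuteSpanningCone S x r := by
  have hpos : ∀ y ∈ S ∩ closedBall x r, 0 < inner ℝ (y - x) w := fun y hy ↦ hc.trans_le (h y hy)
  have ne_apex : ∀ y ∈ S ∩ closedBall x r, y ≠ x := by
    rintro y hy rfl
    simpa using hpos y hy
  obtain ⟨y₀, hy₀⟩ := hne
  have hr : 0 < r := (dist_pos.2 (ne_apex y₀ hy₀)).trans_le hy₀.2
  have hw : w ≠ 0 := by
    rintro rfl
    simpa using hpos y₀ hy₀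
  have hw_pos : 0 < ‖w‖ := norm_pos_iff.2 hw
  refine ⟨‖w‖⁻¹ • w, norm_smul_inv_norm (𝕜 := ℝ) hw, arccos (c / (r * ‖w‖)),
    ⟨arccos_nonneg _, arccos_lt_pi_div_two.2 (by positivity)⟩, ⟨y₀, hy₀⟩, fun y hy ↦ ?_⟩
  refine mem_truncatedCone_of_angle_sub_le (ne_apex y hy) hy.2 ?_
  rw [angle_smul_right_of_pos _ _ (inv_pos.2 hw_pos)]
  have cos_lower_bound : c / (r * ‖w‖) ≤ inner ℝ (y - x) w / (‖y - x‖ * ‖w‖) := by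
    have hyx_pos : 0 < ‖y - x‖ := norm_pos_iff.2 (sub_ne_zero.2 (ne_apex y hy))
    exact div_le_div₀ (hpos y hy).le (h y hy) (mul_pos hyx_pos hw_pos)
      (mul_le_mul_of_nonneg_right (dist_eq_norm y x ▸ hy.2) hw_pos.le)
  exact arccos_le_arccos cos_lower_bound

theorem hasAcuteSpanningCone_of_forall_le_dist (hne : (S ∩ closedBall x r).Nonempty)
    (hρ : 0 ≤ ρ) (hlt : r ^ 2 + dist z x ^ 2 < ρ ^ 2) (h : ∀ y ∈ S, ρ ≤ dist y z) :
    HasAcuteSpanningCone S x r := by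
  refine hasAcuteSpanningCone_of_forall_le_inner (w := x - z)
    (c := (ρ ^ 2 - r ^ 2 - dist z x ^ 2) / 2) hne (by linarith) fun y ⟨hyS, hyr⟩ ↦ ?_
  have hyz : ρ ^ 2 ≤ dist y z ^ 2 := pow_le_pow_left₀ hρ (h y hyS) 2
  have hyx : dist y x ^ 2 ≤ r ^ 2 := pow_le_pow_left₀ dist_nonneg hyr 2
  have law_of_cosines :
      dist y z ^ 2 = dist y x ^ 2 + 2 * inner ℝ (y - x) (x - z) + dist z x ^ 2 := by
    rw [dist_comm z x, dist_eq_norm, dist_eq_norm, dist_eq_norm, ← norm_add_sq_real,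
      sub_add_sub_cancel]
  linarith

theorem exists_unit_forall_lt_inner_of_lt_infDist_convexHull [CompleteSpace E] {G : Set E}
    (hc : 0 ≤ c) (h : c < infDist z (convexHull ℝ G)) :
    ∃ u : E, ‖u‖ = 1 ∧ ∀ q ∈ G, c < inner ℝ (z - q) u := by
  set C := closure (convexHull ℝ G)
  have hG : G.Nonempty := nonempty_iff_ne_empty.2 fun h0 ↦ by
    rw [h0, convexHull_empty, infDist_empty] at h
    linarith
  have hC : Convex ℝ C := (convex_convexHull ℝ G).closure
  obtain ⟨p, hp, hp_min⟩ := exists_norm_eq_iInf_of_complete_convex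
    (hG.convexHull (𝕜 := ℝ)).closure isClosed_closure.isComplete hC z
  have hcp : c < ‖z - p‖ := by
    rw [← infDist_closure] at h
    exact h.trans_le (dist_eq_norm z p ▸ infDist_le_dist_of_mem hp)
  have hpos : 0 < ‖z - p‖ := hc.trans_lt hcp
  refine ⟨‖z - p‖⁻¹ • (z - p), norm_smul_inv_norm (𝕜 := ℝ) (norm_pos_iff.1 hpos), fun q hq ↦ ?_⟩
  have obtuse : inner ℝ (z - p) (q - p) ≤ 0 :=
    (norm_eq_iInf_iff_real_inner_le_zero hC hp).1 hp_min q
      (subset_closure (subset_convexHull ℝ G hq))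
  calc c < ‖z - p‖ := hcp
    _ = ‖z - p‖⁻¹ * ‖z - p‖ ^ 2 := by field_simp
    _ ≤ ‖z - p‖⁻¹ * inner ℝ (z - q) (z - p) := by
      gcongr
      rw [← sub_sub_sub_cancel_right z q p, inner_sub_left, real_inner_self_eq_norm_sq,
        real_inner_comm]
      linarith
    _ = inner ℝ (z - q) (‖z - p‖⁻¹ • (z - p)) := (real_inner_smul_right _ _ _).symm

theorem add_mul_lt_norm_add_smul {d t : ℝ} {a : E} (hμ : |μ| ≤ 1) (hd : 0 ≤ d) (hu : ‖u‖ = 1)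
    (ht : 0 < t) (hda : d ≤ ‖a‖) (h : μ * d < inner ℝ a u) : d + μ * t < ‖a + t • u‖ := by
  refine lt_of_pow_lt_pow_left₀ 2 (norm_nonneg _) ?_
  have hμ_sq : μ ^ 2 ≤ 1 := (sq_le_one_iff_abs_le_one μ).2 hμ
  calc (d + μ * t) ^ 2 = d ^ 2 + 2 * (t * (μ * d)) + μ ^ 2 * t ^ 2 := by ring
    _ < d ^ 2 + 2 * (t * inner ℝ a u) + μ ^ 2 * t ^ 2 := by gcongr
    _ ≤ ‖a‖ ^ 2 + 2 * (t * inner ℝ a u) + 1 * t ^ 2 := by gcongr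
    _ = ‖a + t • u‖ ^ 2 := by
      rw [norm_add_sq_real, real_inner_smul_right, norm_smul, hu, mul_one, norm_eq_abs, sq_abs,
        one_mul]

theorem exists_gt_infDist_forall_le_dist (hK : IsCompact K)
    (h : ∀ q ∈ nearestPoints K z, c < inner ℝ (z - q) u) :
    ∃ m > infDist z K, ∀ q ∈ K, inner ℝ (z - q) u ≤ c → m ≤ dist z q := by
  set F := K ∩ {q | inner ℝ (z - q) u ≤ c}
  have hF : IsCompact F := hK.inter_right (isClosed_le (by fun_prop) continuous_const)
  rcases F.eq_empty_or_nonempty with hF_empty | hF_nonempty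
  · exact ⟨infDist z K + 1, lt_add_one _, fun q hq hqc ↦
      absurd ⟨hq, hqc⟩ (eq_empty_iff_forall_notMem.1 hF_empty q)⟩
  · obtain ⟨p, hp, hp_min⟩ := hF.exists_infDist_eq_dist hF_nonempty z
    refine ⟨dist z p, (infDist_le_dist_of_mem hp.1).lt_of_ne fun hp_eq ↦ ?_, fun q hq hqc ↦
      hp_min ▸ infDist_le_dist_of_mem ⟨hq, hqc⟩⟩
    exact (h p ⟨hp.1, hp_eq.symm⟩).not_ge hp.2

-- The points of `K` outside the half-space `μ * infDist z K < inner ℝ (z - ·) u` are farther from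
-- `z` by a fixed amount, so for small `t` they play no role.
theorem eventually_infDist_add_mul_lt_infDist_add_smul (hKne : K.Nonempty) (hK : IsCompact K)
    (hμ : |μ| ≤ 1) (hu : ‖u‖ = 1)
    (h : ∀ q ∈ nearestPoints K z, μ * infDist z K < inner ℝ (z - q) u) :
    ∀ᶠ t in 𝓝[>] (0 : ℝ), infDist z K + μ * t < infDist (z + t • u) K := by
  obtain ⟨m, hm, far⟩ := exists_gt_infDist_forall_le_dist hK h
  filter_upwards [Ioo_mem_nhdsGT (half_pos (sub_pos.2 hm))] with t ⟨ht, htm⟩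
  obtain ⟨q, hq, hq_min⟩ := hK.exists_infDist_eq_dist hKne (z + t • u)
  rw [hq_min]
  by_cases hqu : inner ℝ (z - q) u ≤ μ * infDist z K
  · have step_length : dist z (z + t • u) = t := by
      rw [dist_self_add_right, norm_smul, hu, mul_one, norm_of_nonneg ht.le]
    have hμt : μ * t ≤ t := mul_le_of_le_one_left ht.le (le_of_abs_le hμ)
    linarith [far q hq hqu, dist_triangle z (z + t • u) q]
  · rw [dist_eq_norm, add_sub_right_comm]
    exact add_mul_lt_norm_add_smul hμ infDist_nonneg hu ht
      (dist_eq_norm z q ▸ infDist_le_dist_of_mem hq) (not_le.1 hqu)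

theorem exists_infDist_add_mul_dist_lt_of_not_isMuCritical [CompleteSpace E] (hKne : K.Nonempty)
    (hK : IsCompact K) (hμ : μ ∈ Icc 0 1) (hz : z ∉ K) (hcrit : ¬ IsMuCritical μ K z)
    (hη : 0 < η) :
    ∃ z', dist z' z ∈ Ioo 0 η ∧ infDist z K + μ * dist z' z < infDist z' K := by
  obtain ⟨u, hu, hinner⟩ := exists_unit_forall_lt_inner_of_lt_infDist_convexHull
    (mul_nonneg hμ.1 infDist_nonneg) (not_le.1 fun hle ↦ hcrit ⟨hz, hle⟩)
  have hμ_abs : |μ| ≤ 1 := abs_le.2 ⟨by linarith [hμ.1], hμ.2⟩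
  obtain ⟨t, hlt, ht⟩ := ((eventually_infDist_add_mul_lt_infDist_add_smul hKne hK hμ_abs hu
    hinner).and (Ioo_mem_nhdsGT hη)).exists
  have step_length : dist (z + t • u) z = t := by
    rw [dist_self_add_left, norm_smul, hu, mul_one, norm_of_nonneg ht.1.le]
  exact ⟨z + t • u, step_length.symm ▸ ht, step_length.symm ▸ hlt⟩

theorem exists_dist_eq_and_infDist_add_mul_le [FiniteDimensional ℝ E] (hKne : K.Nonempty)
    (hK : IsCompact K) (hμ : μ ∈ Icc 0 1) (hx : x ∉ K) (hl : 0 ≤ l)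
    (hcrit : ∀ z, infDist z K ∈ Icc (infDist x K) (infDist x K + l) → ¬ IsMuCritical μ K z) :
    ∃ z, dist z x = l ∧ infDist x K + μ * l ≤ infDist z K := by
  have hcont : Continuous fun z ↦ infDist z K - μ * dist z x :=
    (continuous_infDist_pt K).sub (by fun_prop)
  obtain ⟨z, hzl, hmax⟩ := (isCompact_closedBall x l).exists_isMaxOn
    ⟨x, mem_closedBall_self hl⟩ hcont.continuousOn
  have hmax_le : ∀ y, dist y x ≤ l → infDist y K - μ * dist y x ≤ infDist z K - μ * dist z x :=
    fun y hy ↦ hmax hy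
  have hxz : infDist x K + μ * dist z x ≤ infDist z K := by
    have := hmax_le x (dist_self x ▸ hl)
    rw [dist_self] at this
    linarith
  rcases (mem_closedBall.1 hzl).eq_or_lt with hz_boundary | hz_interior
  · exact ⟨z, hz_boundary, hz_boundary ▸ hxz⟩
  exfalso
  have hz_ge : infDist x K ≤ infDist z K :=
    (le_add_of_nonneg_right (mul_nonneg hμ.1 dist_nonneg)).trans hxz
  have hz_le : infDist z K ≤ infDist x K + l :=
    infDist_le_infDist_add_dist.trans (by gcongr)
  have hzK : z ∉ K := notMem_of_infDist_le_infDist hKne hK.isClosed hx hz_ge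
  obtain ⟨z', ⟨-, hz'z⟩, hlt⟩ := exists_infDist_add_mul_dist_lt_of_not_isMuCritical hKne hK hμ hzK
    (hcrit z ⟨hz_ge, hz_le⟩) (sub_pos.2 hz_interior)
  have htri : dist z' x ≤ dist z' z + dist z x := dist_triangle z' z x
  have hz'_max := hmax_le z' (by linarith)
  linarith [mul_le_mul_of_nonneg_left htri hμ.1]

theorem exists_mem_Ioo_dist_le_and_infDist_add_mul_lt [FiniteDimensional ℝ E] (hKne : K.Nonempty)
    (hK : IsCompact K) (hμ : μ ∈ Icc 0 1) (hx : x ∉ K) (hl : 0 ≤ l) (hlb : l < b)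
    (hcrit : ∀ z, infDist z K ∈ Icc (infDist x K) (infDist x K + l) → ¬ IsMuCritical μ K z) :
    ∃ L ∈ Ioo l b, ∃ z, dist z x ≤ L ∧ infDist x K + μ * L < infDist z K := by
  obtain ⟨z, hzx, hz⟩ := exists_dist_eq_and_infDist_add_mul_le hKne hK hμ hx hl hcrit
  have hz_ge : infDist x K ≤ infDist z K :=
    (le_add_of_nonneg_right (mul_nonneg hμ.1 hl)).trans hz
  have hz_le : infDist z K ≤ infDist x K + l := hzx ▸ infDist_le_infDist_add_dist
  have hzK : z ∉ K := notMem_of_infDist_le_infDist hKne hK.isClosed hx hz_ge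
  obtain ⟨z', ⟨hpos, hz'z⟩, hlt⟩ := exists_infDist_add_mul_dist_lt_of_not_isMuCritical hKne hK hμ
    hzK (hcrit z ⟨hz_ge, hz_le⟩) (sub_pos.2 hlb)
  exact ⟨l + dist z' z, ⟨by linarith, by linarith⟩, z', by linarith [dist_triangle z' z x],
    by linarith⟩

theorem mul_four_sub_three_mul_sq_div_lt (hr : 0 < r) (hμ : μ ∈ Ioo 0 2) :
    r * (4 - 3 * μ ^ 2) / (4 - μ ^ 2) < r * (4 - μ ^ 2) / (4 + μ ^ 2) := by
  have hμ_sq : μ ^ 2 < 2 ^ 2 := pow_lt_pow_left₀ hμ.2 hμ.1.le two_ne_zero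
  rw [div_lt_div_iff₀ (by linarith) (by positivity)]
  linarith [mul_pos hr (pow_pos hμ.1 4)]

theorem stmt10_general [FiniteDimensional ℝ E] (hμ : μ ∈ Ioo 0 1) (hδ : 0 ≤ δ) (hr : 0 < r)
    (hKne : K.Nonempty) (hK : IsCompact K) (hx_le : infDist x K ≤ r + δ)
    (hx_lt : δ + r * (4 - 3 * μ ^ 2) / (4 - μ ^ 2) < infDist x K)
    (hcrit : ∀ z, infDist z K ∈
      Icc (infDist x K) (infDist x K + 2 * (r - infDist x K + δ) / μ) → ¬ IsMuCritical μ K z) :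
    HasAcuteSpanningCone (offset K δ) x r := by
  obtain ⟨hμ_pos, hμ_lt⟩ := hμ
  have hμ_sq : μ ^ 2 < 1 := pow_lt_one₀ hμ_pos.le hμ_lt two_ne_zero
  have hden : 0 < 4 - μ ^ 2 := by linarith
  have hxK : x ∉ K := by
    have hnum : 0 < 4 - 3 * μ ^ 2 := by linarith
    exact (hK.isClosed.notMem_iff_infDist_pos hKne).2 (lt_trans (by positivity) hx_lt)
  have hgap : 2 * (r - infDist x K + δ) / μ < 4 * r * μ / (4 - μ ^ 2) := by
    rw [← lt_sub_iff_add_lt', div_lt_iff₀ hden] at hx_lt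
    rw [div_lt_div_iff₀ hμ_pos hden]
    linarith
  obtain ⟨L, ⟨hL_gt, hL_lt⟩, z, hzx, hz⟩ := exists_mem_Ioo_dist_le_and_infDist_add_mul_lt hKne hK
    ⟨hμ_pos.le, hμ_lt.le⟩ hxK (div_nonneg (by linarith) hμ_pos.le) hgap hcrit
  have hL : 0 < L := lt_of_le_of_lt (div_nonneg (by linarith) hμ_pos.le) hL_gt
  rw [div_lt_iff₀ hμ_pos] at hL_gt
  rw [lt_div_iff₀ hden] at hL_lt
  refine hasAcuteSpanningCone_of_forall_le_dist (z := z) (ρ := r + μ * L / 2)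
    (offset_inter_closedBall_nonempty hKne hK hr.le hδ hx_le) (by positivity) ?_ fun y hy ↦ ?_
  · calc r ^ 2 + dist z x ^ 2 ≤ r ^ 2 + L ^ 2 := by gcongr
      _ < (r + μ * L / 2) ^ 2 := by linarith [mul_lt_mul_of_pos_left hL_lt hL]
  · have hyK : infDist y K ≤ δ := hy
    have hzy : infDist z K ≤ infDist y K + dist y z :=
      dist_comm z y ▸ infDist_le_infDist_add_dist
    linarith

end

/-- Local spanning-cone lemma (nonnegative curvature / Euclidean case): absence of μ-critical
points of `d_K` in the annulus `[d_K(x), d_K(x) + 2(r − d_K(x) + δ)/μ]`, together with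
`δ ≤ d_K(x) − r(4−μ²)/(4+μ²)`, gives an acute `r`-spanning cone for `K_δ` from `x`. -/
theorem stmt10 {E : Type*} [NormedAddCommGroup E] [InnerProductSpace ℝ E]
    [FiniteDimensional ℝ E]
    (μ : ℝ) (hμ : μ ∈ Set.Ioo (0 : ℝ) 1) (δ r : ℝ) (hδ : 0 < δ) (hδr : δ < r)
    (K : Set E) (hKne : K.Nonempty) (hKc : IsCompact K)
    (x : E) (hx1 : infDist x K ≤ r + δ)
    (hx2 : δ ≤ infDist x K - r * (4 - μ ^ 2) / (4 + μ ^ 2))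
    (hcrit : ∀ z : E, z ∉ K →
      infDist z K ∈ Set.Icc (infDist x K) (infDist x K + 2 * (r - infDist x K + δ) / μ) →
      ¬ (infDist z (convexHull ℝ {q ∈ K | dist z q = infDist z K}) ≤ μ * infDist z K)) :
    ∃ w : E, ‖w‖ = 1 ∧ ∃ β ∈ Set.Ico (0 : ℝ) (π / 2),
      ({y : E | infDist y K ≤ δ} ∩ closedBall x r).Nonempty ∧
      {y : E | infDist y K ≤ δ} ∩ closedBall x r ⊆
        {y : E | ∃ t ∈ Set.Icc (0 : ℝ) r, ∃ v : E, ‖v‖ = 1 ∧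
          InnerProductGeometry.angle v w ≤ β ∧ y = x + t • v} := by
  have hr : 0 < r := hδ.trans hδr
  have threshold := mul_four_sub_three_mul_sq_div_lt hr ⟨hμ.1, hμ.2.trans one_lt_two⟩
  exact stmt10_general hμ hδ.le hr hKne hKc hx1 (by linarith) fun z hz hzcrit ↦
    hcrit z hzcrit.1 hz hzcrit.2
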